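/- Let (g,J,ω,α) be a Frobenius–Kähler structure on the real Lie algebra (𝔤,[·,·]) (so ω(x,y) = α([x,y]) = g(x,Jy)), and let D ∈ Der(𝔤) satisfy α∘D = 0, α∘J∘D = 0, and D∘J = J∘D. Let 𝔤(D) = ℝξ ⋉ 𝔤 be the extension of 𝔤 by D, with [ξ,x] = D(x) for x ∈ 𝔤. Define ᾱ ∈ 𝔤(D)* by ᾱ|_𝔤 = α and ᾱ(ξ) = 1, and define Φ ∈ End(𝔤(D)) by Φ(x) = J(x) − α(J(x))·ξ for x ∈ 𝔤 and Φ(ξ) = 0. Then: (i) Φ∘Φ = −Id + ᾱ⊗ξ; (ii) N_Φ = −dᾱ⊗ξ; (iii) dᾱ(ξ,·) = 0 and the restriction of dᾱ to Ker(ᾱ) is nondegenerate (so ᾱ is a contact form on 𝔤(D) with Reeb vector ξ). Hence 𝔤(D), with a suitable adapted metric, is a Sasakian Lie algebra. -/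

import Mathlib

/-- The Nijenhuis tensor of a linear endomorphism `F` of a real Lie algebra:
`N_F(x,y) = F²([x,y]) + [Fx,Fy] − F([x,Fy]) − F([Fx,y])`. -/
def nijenhuis {L : Type*} [LieRing L] [LieAlgebra ℝ L] (F : L →ₗ[ℝ] L) (x y : L) : L :=
  F (F ⁅x, y⁆) + ⁅F x, F y⁆ - F ⁅x, F y⁆ - F ⁅F x, y⁆

/-- Let `(g,J,ω,α)` be a Frobenius–Kähler structure on a real Lie algebra `G`
(`ω(x,y) = α([x,y]) = g(x,Jy)`), and let `D ∈ Der(G)` satisfy `α∘D = 0`, `α∘J∘D = 0`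
and `D∘J = J∘D`.  On the extension `E = ℝξ ⋉ G` by `D`, with `ᾱ = α + ξ*` and
`Φ(x) = J(x) − α(J(x))ξ` on `G`, `Φ(ξ) = 0`, one has: `Φ∘Φ = −Id + ᾱ⊗ξ`,
`N_Φ = −dᾱ⊗ξ`, `dᾱ(ξ,·) = 0`, and `dᾱ` is nondegenerate on `Ker ᾱ`; that is,
`(ξ, ᾱ, Φ)` is a Sasakian structure on `E`. -/
theorem frobenius_kahler_extension_by_derivation_is_sasakian
    {G E : Type*} [LieRing G] [LieAlgebra ℝ G] [LieRing E] [LieAlgebra ℝ E]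
    -- the Frobenius–Kähler structure (g, J, ω, α) on G
    (g : G →ₗ[ℝ] G →ₗ[ℝ] ℝ) (J : G →ₗ[ℝ] G) (ω : G →ₗ[ℝ] G →ₗ[ℝ] ℝ) (α : G →ₗ[ℝ] ℝ)
    (hg_symm : ∀ x y : G, g x y = g y x)
    (hg_pos : ∀ x : G, x ≠ 0 → 0 < g x x)
    (hJ2 : ∀ x : G, J (J x) = -x)
    (hgJ : ∀ x y : G, g (J x) y + g x (J y) = 0)
    (hNJ : ∀ x y : G, nijenhuis J x y = 0)
    (hωg : ∀ x y : G, ω x y = g x (J y))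
    (hωα : ∀ x y : G, ω x y = α ⁅x, y⁆)
    -- the derivation D
    (D : G →ₗ[ℝ] G)
    (hDer : ∀ x y : G, D ⁅x, y⁆ = ⁅D x, y⁆ + ⁅x, D y⁆)
    (hαD : ∀ x : G, α (D x) = 0)
    (hαJD : ∀ x : G, α (J (D x)) = 0)
    (hDJ : ∀ x : G, D (J x) = J (D x))
    -- E = ℝξ ⋉ G is the extension of G by D
    (i : G →ₗ[ℝ] E) (ξ : E)
    (hdecomp : ∀ v : E, ∃! p : G × ℝ, v = i p.1 + p.2 • ξ)
    (hbrG : ∀ x y : G, ⁅i x, i y⁆ = i ⁅x, y⁆)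
    (hbrξ : ∀ x : G, ⁅ξ, i x⁆ = i (D x))
    -- ᾱ with ᾱ|_G = α and ᾱ(ξ) = 1
    (αE : E →ₗ[ℝ] ℝ) (hαE : ∀ x : G, αE (i x) = α x) (hαEξ : αE ξ = 1)
    -- Φ(x) = J(x) − α(J(x))·ξ on G, Φ(ξ) = 0
    (Φ : E →ₗ[ℝ] E)
    (hΦ : ∀ x : G, Φ (i x) = i (J x) - α (J x) • ξ)
    (hΦξ : Φ ξ = 0) :
    -- (i)
    (∀ v : E, Φ (Φ v) = -v + αE v • ξ) ∧
    -- (ii) N_Φ = −dᾱ⊗ξ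
    (∀ U V : E, nijenhuis Φ U V = αE ⁅U, V⁆ • ξ) ∧
    -- (iii) ᾱ is a contact form on E with Reeb vector ξ
    (∀ v : E, αE ⁅ξ, v⁆ = 0) ∧
    (∀ v : E, αE v = 0 → (∀ v' : E, αE v' = 0 → αE ⁅v, v'⁆ = 0) → v = 0) := by
  have hξ' : ∀ x : G, ⁅i x, ξ⁆ = -i (D x) := fun x => by rw [← lie_skew, hbrξ]
  have hP : ∀ v : E, ∃ (x : G) (s : ℝ), v = i x + s • ξ := fun v => by
    obtain ⟨p, hp, _⟩ := hdecomp v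
    exact ⟨p.1, p.2, hp⟩
  have h1 : ∀ v : E, Φ (Φ v) = -v + αE v • ξ := by
    intro v
    obtain ⟨x, s, rfl⟩ := hP v
    simp only [map_add, map_smul, map_sub, map_neg, map_zero, smul_zero, hΦ, hΦξ, hαE, hαEξ, hJ2, smul_eq_mul]
    module
  have h3 : ∀ v : E, αE ⁅ξ, v⁆ = 0 := by
    intro v
    obtain ⟨x, s, rfl⟩ := hP v
    simp [hbrξ, hαE, hαD]
  refine ⟨h1, ?_, h3, ?_⟩
  · intro U V
    obtain ⟨x, s, rfl⟩ := hP U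
    obtain ⟨y, t, rfl⟩ := hP V
    have hN := hNJ x y
    unfold nijenhuis at hN
    rw [hJ2] at hN
    have hinv : α ⁅J x, J y⁆ = α ⁅x, y⁆ := by
      rw [← hωα, ← hωα, hωg, hωg]
      have := hgJ x (J (J y))
      rw [hJ2 (J y)] at this
      have h2 := hgJ x (J y)
      simp only [hJ2, map_neg] at *
      linarith
    have hNα := congrArg α hN
    have hNi := congrArg i hN
    simp only [map_add, map_sub, map_neg, map_zero, hinv] at hNα hNi
    have e1 : α (J ⁅x, J y⁆) = - α (J ⁅J x, y⁆) := by linarith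
    have e2 : i ⁅J x, J y⁆ = i ⁅x, y⁆ + i (J ⁅x, J y⁆) + i (J ⁅J x, y⁆) := by
      rw [← sub_eq_zero, ← hNi]; abel
    unfold nijenhuis
    rw [h1]
    simp only [map_add, map_smul, map_sub, map_neg, map_zero, smul_zero, hΦ, hΦξ, hαE, hαEξ, smul_eq_mul, lie_add,
      add_lie, lie_sub, sub_lie, lie_smul, smul_lie, lie_self, hbrG, hbrξ, hξ', hαD, hαJD, hDJ,
      hJ2, e1, e2, smul_zero, add_zero, zero_add]
    module
  · intro v hv h
    obtain ⟨x, s, rfl⟩ := hP v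
    have key := h (i (J x) - α (J x) • ξ) (by simp [hαE, hαEξ])
    simp only [map_add, map_smul, map_sub, map_neg, hαE, hαEξ, smul_eq_mul, lie_add,
      add_lie, lie_sub, sub_lie, lie_smul, smul_lie, lie_self, hbrG, hbrξ, hξ', hαD,
      smul_zero, add_zero, zero_add] at key hv
    rw [← hωα, hωg, hJ2] at key
    have hx : x = 0 := by
      by_contra hx
      have := hg_pos x hx
      simp at key
      linarith
    subst hx
    simp at hv
    simp [hv]
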